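/- There is a constant c > 0 such that every satisfiable CTL* formula θ has a model with at most 2^{2^{c·|θ|}} states in which every state has at most 2^{|θ|} successors, where |θ| denotes the number of subformulas of θ. -/

import Mathlib

/-- Branching-time formulas in negation normal form. -/
inductive Form : Type where
  | tt : Form
  | ff : Form
  | prop : ℕ → Form
  | nprop : ℕ → Form
  | or : Form → Form → Form
  | and : Form → Form → Form
  | next : Form → Form
  | unt : Form → Form → Form
  | rel : Form → Form → Form
  | ex : Form → Form
  | al : Form → Form
deriving DecidableEq

namespace Form

/-- The set of subformulas of a formula. -/
def subf : Form → Finset Form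
  | .tt => {.tt}
  | .ff => {.ff}
  | .prop p => {.prop p}
  | .nprop p => {.nprop p}
  | .or a b => insert (.or a b) (a.subf ∪ b.subf)
  | .and a b => insert (.and a b) (a.subf ∪ b.subf)
  | .next a => insert (.next a) a.subf
  | .unt a b => insert (.unt a b) (a.subf ∪ b.subf)
  | .rel a b => insert (.rel a b) (a.subf ∪ b.subf)
  | .ex a => insert (.ex a) a.subf
  | .al a => insert (.al a) a.subf

/-- Literals are `tt`, `ff`, `p` and `¬p`. -/
def IsLiteral : Form → Prop
  | .tt => True
  | .ff => True
  | .prop _ => True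
  | .nprop _ => True
  | _ => False

/-- A formula of the form `Xφ`. -/
def IsNext : Form → Prop
  | .next _ => True
  | _ => False

/-- Remove a frontal `X`. -/
def unX : Form → Form
  | .next a => a
  | a => a

end Form

/-- The Fischer-Ladner closure of a formula: its subformulas together with
`X(φ U ψ)` for every subformula `φ U ψ` and `X(φ R ψ)` for every subformula `φ R ψ`. -/
def FL (θ : Form) : Finset Form :=
  θ.subf ∪ θ.subf.image (fun ψ =>
    match ψ with
    | .unt a b => Form.next (.unt a b)
    | .rel a b => Form.next (.rel a b)
    | _ => θ)

/-- A (total) transition system with a designated initial state and a labeling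
of states with sets of propositional constants. -/
structure TS (S : Type) where
  init : S
  step : S → S → Prop
  total : ∀ s, ∃ t, step s t
  label : S → Set ℕ

/-- An infinite path through a transition system. -/
structure TS.Path {S : Type} (T : TS S) where
  seq : ℕ → S
  valid : ∀ i, T.step (seq i) (seq (i + 1))

/-- The suffix `π^k` of a path `π`. -/
def TS.Path.suffix {S : Type} {T : TS S} (π : T.Path) (k : ℕ) : T.Path :=
  ⟨fun i => π.seq (k + i), fun i => π.valid (k + i)⟩

/-- Satisfaction of a branching-time formula on a path of a transition system. -/
def Sat {S : Type} (T : TS S) : T.Path → Form → Prop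
  | _, .tt => True
  | _, .ff => False
  | π, .prop p => p ∈ T.label (π.seq 0)
  | π, .nprop p => p ∉ T.label (π.seq 0)
  | π, .or a b => Sat T π a ∨ Sat T π b
  | π, .and a b => Sat T π a ∧ Sat T π b
  | π, .next a => Sat T (π.suffix 1) a
  | π, .unt a b => ∃ k, Sat T (π.suffix k) b ∧ ∀ j < k, Sat T (π.suffix j) a
  | π, .rel a b => ∀ k, Sat T (π.suffix k) b ∨ ∃ j < k, Sat T (π.suffix j) a
  | π, .ex a => ∃ π' : T.Path, π'.seq 0 = π.seq 0 ∧ Sat T π' a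
  | π, .al a => ∀ π' : T.Path, π'.seq 0 = π.seq 0 → Sat T π' a

/-- A state formula: satisfaction only depends on the first state of the path. -/
def IsStateForm (φ : Form) : Prop :=
  ∀ (S : Type) (T : TS S) (π π' : T.Path), π.seq 0 = π'.seq 0 → (Sat T π φ ↔ Sat T π' φ)

/-- A (state) formula is satisfiable if it holds at the initial state of some
transition system. -/
def Satisfiable (φ : Form) : Prop :=
  ∃ (S : Type) (T : TS S) (π : T.Path), π.seq 0 = T.init ∧ Sat T π φ

/-- Equivalence of branching-time formulas. -/
def FormEquiv (φ ψ : Form) : Prop :=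
  ∀ (S : Type) (T : TS S) (π : T.Path), Sat T π φ ↔ Sat T π ψ

/-! The states of the small model are the paths of a given model `T` modulo a finite equivalence,
and in the state of a path `π` one can choose a truth set `K ⊆ θ.subf` realizable at the first state
of `π` and move to the suffix from position `1` of a path realizing it. The new model satisfies the
same subformulas of `θ` once every path of it has a truth set realizable in `T`, and every truth set
realizable in `T` is realized by following it. Both claims fail only along a path on which some
ordinal rank decreases infinitely often: for the first, an unrealizable truth set admits no fair
attempt at sustaining it in `T`, so attempts have a well-founded rank; for the second, the rank is
the delay until a pending eventuality is fulfilled.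

In the quotient ranks may go up again when a path is replaced by its representative. A state
therefore also records the order of the finitely many ranks of its path and a list of them by age,
and its representative has the shortlex-minimal list of ranks. Along an infinite path of the new
model the place of a tracked rank in the list stabilizes, after which the head of the list is an
ordinal that never increases, hence eventually constant, and can be removed. By induction on the
length of the list, no tracked rank decreases infinitely often. -/

namespace Form

theorem mem_subf_self (φ : Form) : φ ∈ φ.subf := by
  cases φ <;> simp only [subf, Finset.mem_singleton, Finset.mem_insert, true_or]

theorem subf_subset_of_mem {θ ψ : Form} (h : ψ ∈ θ.subf) : ψ.subf ⊆ θ.subf := by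
  induction θ with
  | tt | ff | prop | nprop =>
    rw [Finset.mem_singleton.1 h]
  | or a b iha ihb | and a b iha ihb | unt a b iha ihb | rel a b iha ihb =>
    rcases Finset.mem_insert.1 h with rfl | h
    · rfl
    · refine Finset.Subset.trans ?_ (Finset.subset_insert _ _)
      rcases Finset.mem_union.1 h with h | h
      exacts [(iha h).trans Finset.subset_union_left, (ihb h).trans Finset.subset_union_right]
  | next a iha | ex a iha | al a iha =>
    rcases Finset.mem_insert.1 h with rfl | h
    exacts [subset_rfl, (iha h).trans (Finset.subset_insert _ _)]

end Form

namespace TS.Path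

variable {S : Type} {T : TS S}

theorem suffix_zero (π : T.Path) : π.suffix 0 = π := by
  simp only [suffix, Nat.zero_add]

theorem suffix_suffix (π : T.Path) (j k : ℕ) : (π.suffix j).suffix k = π.suffix (j + k) := by
  simp only [suffix, Nat.add_assoc]

theorem exists_suffix_one_eq {v : S} {π : T.Path} (h : T.step v (π.seq 0)) :
    ∃ π' : T.Path, π'.seq 0 = v ∧ π'.suffix 1 = π := by
  refine ⟨⟨fun t => Nat.casesOn t v π.seq, ?_⟩, rfl, ?_⟩
  · rintro (_ | t)
    exacts [h, π.valid t]
  · simp only [suffix, Nat.add_comm 1]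

end TS.Path

namespace CTLStar

open Filter

/-! ### Sequences -/

section Sequences

theorem eventually_of_frequently_of_eventually_succ {p : ℕ → Prop}
    (hp : ∃ᶠ t in atTop, p t) (hsucc : ∀ᶠ t in atTop, p t → p (t + 1)) :
    ∀ᶠ t in atTop, p t := by
  obtain ⟨N, hN⟩ := eventually_atTop.1 hsucc
  obtain ⟨s, hs, hps⟩ := frequently_atTop.1 hp N
  refine eventually_atTop.2 ⟨s, fun t ht => ?_⟩
  induction t, ht using Nat.le_induction with
  | base => exact hps
  | succ t ht ih => exact hN t (hs.trans ht) ih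

theorem exists_eventually_eq_of_eventually_succ_le {P : Type*} [PartialOrder P] [WellFoundedLT P]
    {u : ℕ → P} (hu : ∀ᶠ t in atTop, u (t + 1) ≤ u t) : ∃ c, ∀ᶠ t in atTop, u t = c := by
  obtain ⟨N, hN⟩ := eventually_atTop.1 hu
  have hanti : Antitone fun t => u (t + N) :=
    antitone_nat_of_succ_le fun t => by
      simpa only [Nat.add_right_comm] using hN (t + N) (Nat.le_add_left N t)
  obtain ⟨n, hn⟩ := WellFoundedLT.antitone_chain_condition hanti
  refine ⟨u (n + N), eventually_atTop.2 ⟨n + N, fun t ht => ?_⟩⟩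
  simpa only [Nat.sub_add_cancel (le_of_add_le_right ht)] using (hn (t - N) (by omega)).symm

theorem not_eventually_succ_lt {P : Type*} [PartialOrder P] [WellFoundedLT P] (u : ℕ → P) :
    ¬ ∀ᶠ t in atTop, u (t + 1) < u t := by
  intro hu
  obtain ⟨c, hc⟩ := exists_eventually_eq_of_eventually_succ_le (hu.mono fun _ h => h.le)
  obtain ⟨t, hlt, ht, ht₁⟩ := (hu.and (hc.and ((tendsto_add_atTop_nat 1).eventually hc))).exists
  exact hlt.ne (ht₁.trans ht.symm)

/-- The until operator on predicates over discrete time: `q` holds at some time from `t` on, and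
`p` holds from `t` until then. -/
def UntilAt (p q : ℕ → Prop) (t : ℕ) : Prop :=
  ∃ k, q (t + k) ∧ ∀ j < k, p (t + j)

/-- The release operator, dual to `UntilAt`. -/
def ReleaseAt (p q : ℕ → Prop) (t : ℕ) : Prop :=
  ∀ k, q (t + k) ∨ ∃ j < k, p (t + j)

variable {p q u : ℕ → Prop} {t : ℕ}

theorem not_untilAt_not :
    ¬ UntilAt (fun s => ¬ p s) (fun s => ¬ q s) t ↔ ReleaseAt p q t := by
  simp only [UntilAt, ReleaseAt]
  push Not
  exact forall_congr' fun k => or_iff_not_imp_left.symm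

theorem untilAt_iff : UntilAt p q t ↔ q t ∨ p t ∧ UntilAt p q (t + 1) := by
  constructor
  · rintro ⟨_ | k, hk, hj⟩
    · exact Or.inl hk
    · refine Or.inr ⟨hj 0 k.succ_pos, k, ?_, fun j hjk => ?_⟩
      · rwa [Nat.add_right_comm]
      · rw [Nat.add_right_comm]
        exact hj (j + 1) (Nat.succ_lt_succ hjk)
  · rintro (hq | ⟨hp, k, hk, hj⟩)
    · exact ⟨0, hq, fun j hj => absurd hj j.not_lt_zero⟩
    · refine ⟨k + 1, by rwa [← Nat.add_assoc, Nat.add_right_comm], ?_⟩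
      rintro (_ | j) hjk
      · exact hp
      · rw [← Nat.add_assoc, Nat.add_right_comm]
        exact hj j (Nat.lt_of_succ_lt_succ hjk)

theorem releaseAt_iff : ReleaseAt p q t ↔ q t ∧ (p t ∨ ReleaseAt p q (t + 1)) := by
  rw [← not_untilAt_not, ← not_untilAt_not, untilAt_iff]
  tauto

theorem iff_untilAt_of_fixpoint (hu : ∀ t, u t ↔ q t ∨ p t ∧ u (t + 1))
    (hfair : ∃ᶠ t in atTop, u t → q t) (t : ℕ) : u t ↔ UntilAt p q t := by
  constructor
  · intro hut
    by_contra hnot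
    have hinv : ∀ s ≥ t, u s ∧ ¬ UntilAt p q s := by
      intro s hs
      induction s, hs using Nat.le_induction with
      | base => exact ⟨hut, hnot⟩
      | succ s _ ih =>
        rw [hu s, untilAt_iff] at ih
        tauto
    obtain ⟨s, hs, hus⟩ := frequently_atTop.1 hfair t
    exact (hinv s hs).2 (untilAt_iff.2 (Or.inl (hus (hinv s hs).1)))
  · rintro ⟨k, hk, hj⟩
    induction k generalizing t with
    | zero => exact (hu t).2 (Or.inl hk)
    | succ k ih =>
      refine (hu t).2 (Or.inr ⟨hj 0 k.succ_pos, ih (t + 1) ?_ fun j hjk => ?_⟩)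
      · rwa [Nat.add_right_comm]
      · rw [Nat.add_right_comm]
        exact hj (j + 1) (Nat.succ_lt_succ hjk)

theorem iff_releaseAt_of_fixpoint (hu : ∀ t, u t ↔ q t ∧ (p t ∨ u (t + 1)))
    (hfair : ∃ᶠ t in atTop, q t → u t) (t : ℕ) : u t ↔ ReleaseAt p q t := by
  rw [← not_untilAt_not, ← iff_untilAt_of_fixpoint (u := fun s => ¬ u s) _ _ t, not_not]
  · intro s
    rw [hu s]
    tauto
  · exact hfair.mono fun s hs => mt hs

theorem frequently_untilAt_imp : ∃ᶠ t in atTop, UntilAt p q t → q t := by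
  refine frequently_atTop.2 fun t => ?_
  by_cases h : UntilAt p q t
  · obtain ⟨k, hk, -⟩ := h
    exact ⟨t + k, Nat.le_add_right t k, fun _ => hk⟩
  · exact ⟨t, le_rfl, fun ht => absurd ht h⟩

theorem frequently_imp_releaseAt : ∃ᶠ t in atTop, q t → ReleaseAt p q t := by
  refine (frequently_untilAt_imp (p := fun s => ¬ p s) (q := fun s => ¬ q s)).mono ?_
  intro s hs hq
  exact not_untilAt_not.1 fun h => hs h hq

end Sequences

/-! ### Ordinal ranks for graphs without Büchi paths -/

section Rank

universe v

variable {Y : Type v} {E : Y → Y → Prop} {F : Y → Prop}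

/-- The `n`-th iterate describes the vertices from which `G` can be reached in `n` steps. -/
def Preimage (E : Y → Y → Prop) (G : Y → Prop) (y : Y) : Prop :=
  ∃ z, E y z ∧ G z

theorem exists_preimage_iterate_of_reflTransGen {G : Y → Prop} {y z : Y}
    (hyz : Relation.ReflTransGen E y z) (hz : G z) : ∃ n, (Preimage E)^[n] G y := by
  induction hyz using Relation.ReflTransGen.head_induction_on with
  | refl => exact ⟨0, hz⟩
  | @head x w hxw _ ih =>
    obtain ⟨n, hn⟩ := ih
    exact ⟨n + 1, by rw [Function.iterate_succ_apply']; exact ⟨w, hxw, hn⟩⟩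

/- From each vertex follow a shortest path to a marked vertex with a successor in `B`: the distance
strictly decreases except at the marked vertices, so these recur. -/
theorem exists_path_frequently {B : Y → Prop}
    (hB : ∀ y, B y → ∃ w z, Relation.ReflTransGen E y w ∧ F w ∧ E w z ∧ B z) {y₀ : Y} (h₀ : B y₀) :
    ∃ y : ℕ → Y, (∀ t, E (y t) (y (t + 1))) ∧ ∃ᶠ t in atTop, F (y t) := by
  classical
  let G : Y → Prop := fun y => F y ∧ ∃ z, E y z ∧ B z
  let A : Type v := {y // ∃ n, (Preimage E)^[n] G y}
  have hBA : ∀ y, B y → ∃ n, (Preimage E)^[n] G y := fun y hy => by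
    obtain ⟨w, z, hyw, hw, hwz, hz⟩ := hB y hy
    exact exists_preimage_iterate_of_reflTransGen hyw ⟨hw, z, hwz, hz⟩
  let dist : A → ℕ := fun y => Nat.find y.2
  have hstep : ∀ y : A, ∃ z : A, E y.1 z.1 ∧ (F y.1 ∨ dist z < dist y) := by
    intro y
    have hy : (Preimage E)^[dist y] G y.1 := Nat.find_spec y.2
    rcases hn : dist y with _ | n <;> rw [hn] at hy
    · obtain ⟨hF, z, hyz, hz⟩ := hy
      exact ⟨⟨z, hBA z hz⟩, hyz, Or.inl hF⟩
    · rw [Function.iterate_succ_apply'] at hy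
      obtain ⟨z, hyz, hz⟩ := hy
      exact ⟨⟨z, n, hz⟩, hyz, Or.inr (Nat.lt_succ_of_le (Nat.find_min' _ hz))⟩
  choose next hE hF using hstep
  let y : ℕ → A := fun t => next^[t] ⟨y₀, hBA y₀ h₀⟩
  have hy : ∀ t, y (t + 1) = next (y t) := fun t => Function.iterate_succ_apply' next t _
  refine ⟨fun t => (y t).1, fun t => by simpa only [hy] using hE (y t), fun hnot => ?_⟩
  refine not_eventually_succ_lt (fun t => dist (y t)) (hnot.mono fun t ht => ?_)
  simpa only [hy] using (hF (y t)).resolve_left ht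

theorem exists_ordinal_rank
    (hEF : ∀ y : ℕ → Y, (∀ t, E (y t) (y (t + 1))) → ¬ ∃ᶠ t in atTop, F (y t)) :
    ∃ r : Y → Ordinal.{v}, ∀ x y, E x y → r y ≤ r x ∧ (F x → r y < r x) := by
  let P : Y → Y → Prop := fun z y => ∃ w, Relation.ReflTransGen E y w ∧ F w ∧ E w z
  have hwf : WellFounded P := by
    by_contra hnot
    obtain ⟨y₀, hy₀⟩ : ∃ y, ¬ Acc P y := by
      by_contra! hacc
      exact hnot ⟨hacc⟩
    obtain ⟨y, hE, hF⟩ := exists_path_frequently (E := E) (F := F) (B := fun y => ¬ Acc P y)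
      (fun y hy => by
        obtain ⟨z, hz, w, hw⟩ := exists_not_acc_lt_of_not_acc hy
        exact ⟨w, z, hw.1, hw.2.1, hw.2.2, hz⟩) hy₀
    exact hEF y hE hF
  have : IsWellFounded Y P := ⟨hwf⟩
  refine ⟨IsWellFounded.rank P, fun x y hxy => ⟨?_, fun hx => ?_⟩⟩
  · rw [IsWellFounded.rank_eq]
    refine Ordinal.iSup_le ?_
    rintro ⟨z, w, hyw, hw⟩
    exact Order.succ_le_of_lt (IsWellFounded.rank_lt_of_rel ⟨w, hyw.head hxy, hw⟩)
  · exact IsWellFounded.rank_lt_of_rel ⟨x, .refl, hx, hxy⟩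

end Rank

/-! ### Age-ordered lists and their threads -/

section Thread

variable {O : Type*} [LinearOrder O]

/-- Update of a list `L` of values, oldest first, to a list of the values in `R`. Each entry of `L`
in turn passes its place on to the largest value of `R` that is not above it and still unclaimed,
or dies if there is none; the unclaimed values join at the end. -/
noncomputable def refresh : List O → Finset O → List O
  | [], R => R.toList
  | ρ :: L, R =>
    if h : (R.filter (· ≤ ρ)).Nonempty then
      (R.filter (· ≤ ρ)).max' h :: refresh L (R.erase ((R.filter (· ≤ ρ)).max' h))
    else refresh L R

theorem refresh_cons_of_exists_le {ρ : O} {R : Finset O} (L : List O) (h : ∃ x ∈ R, x ≤ ρ) :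
    ∃ m, IsGreatest {x | x ∈ R ∧ x ≤ ρ} m ∧ refresh (ρ :: L) R = m :: refresh L (R.erase m) := by
  have hne : (R.filter (· ≤ ρ)).Nonempty := by
    simpa only [Finset.Nonempty, Finset.mem_filter] using h
  refine ⟨(R.filter (· ≤ ρ)).max' hne, ?_, by rw [refresh, dif_pos hne]⟩
  simpa only [Finset.coe_filter] using Finset.isGreatest_max' _ hne

theorem refresh_cons_of_not_exists_le {ρ : O} {R : Finset O} (L : List O)
    (h : ¬ ∃ x ∈ R, x ≤ ρ) : refresh (ρ :: L) R = refresh L R := by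
  rw [refresh, dif_neg]
  simpa only [Finset.Nonempty, Finset.mem_filter] using h

theorem mem_refresh {L : List O} {R : Finset O} {y : O} : y ∈ refresh L R ↔ y ∈ R := by
  induction L generalizing R with
  | nil => exact Finset.mem_toList
  | cons ρ L ih =>
    by_cases h : ∃ x ∈ R, x ≤ ρ
    · obtain ⟨m, hm, hcons⟩ := refresh_cons_of_exists_le L h
      rw [hcons, List.mem_cons, ih, Finset.mem_erase]
      refine ⟨?_, fun hy => (em (y = m)).imp_right fun hne => ⟨hne, hy⟩⟩
      rintro (rfl | hy)
      exacts [hm.1.1, hy.2]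
    · rw [refresh_cons_of_not_exists_le L h, ih]

theorem nodup_refresh (L : List O) (R : Finset O) : (refresh L R).Nodup := by
  induction L generalizing R with
  | nil => exact R.nodup_toList
  | cons ρ L ih =>
    by_cases h : ∃ x ∈ R, x ≤ ρ
    · obtain ⟨m, -, hcons⟩ := refresh_cons_of_exists_le L h
      rw [hcons, List.nodup_cons, mem_refresh]
      exact ⟨Finset.notMem_erase m R, ih _⟩
    · rw [refresh_cons_of_not_exists_le L h]
      exact ih R

/-- The place of the oldest entry of `L` that is at least `a`; it never increases along a thread. -/
def slot (a : O) (L : List O) : ℕ :=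
  L.findIdx (a ≤ ·)

theorem slot_cons (a ρ : O) (L : List O) :
    slot a (ρ :: L) = if a ≤ ρ then 0 else slot a L + 1 := by
  by_cases h : a ≤ ρ <;> simp [slot, List.findIdx_cons, h]

theorem slot_map {f : O → O} {s : Set O} (hf : StrictMonoOn f s) {b : O} (hb : b ∈ s)
    {L : List O} (hL : ∀ y ∈ L, y ∈ s) : slot (f b) (L.map f) = slot b L := by
  induction L with
  | nil => rfl
  | cons ρ L ih =>
    rw [List.forall_mem_cons] at hL
    rw [List.map_cons, slot_cons, slot_cons, ih hL.2]
    simp only [hf.le_iff_le hb hL.1]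

theorem slot_refresh_le {L : List O} {R : Finset O} {a b : O} (ha : a ∈ L) (hb : b ∈ R)
    (hba : b ≤ a) : slot b (refresh L R) ≤ slot a L := by
  induction L generalizing R with
  | nil => exact absurd ha List.not_mem_nil
  | cons ρ L ih =>
    rw [slot_cons]
    by_cases h : ∃ x ∈ R, x ≤ ρ
    · obtain ⟨m, hm, hcons⟩ := refresh_cons_of_exists_le L h
      rw [hcons, slot_cons]
      by_cases haρ : a ≤ ρ
      · rw [if_pos (hm.2 ⟨hb, hba.trans haρ⟩)]
        exact Nat.zero_le _
      · rw [if_neg haρ]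
        split_ifs with hbm
        · exact Nat.zero_le _
        · exact Nat.succ_le_succ (ih (List.mem_of_ne_of_mem (fun h => haρ h.le) ha)
            (Finset.mem_erase.2 ⟨fun h => hbm h.le, hb⟩))
    · have haρ : ¬ a ≤ ρ := fun haρ => h ⟨b, hb, hba.trans haρ⟩
      rw [refresh_cons_of_not_exists_le L h, if_neg haρ]
      exact (ih (List.mem_of_ne_of_mem (fun h => haρ h.le) ha) hb).trans (Nat.le_succ _)

theorem slot_refresh_lt {ρ : O} {L : List O} {R : Finset O} {a b : O} (ha : a ∈ ρ :: L)
    (hb : b ∈ R) (hba : b ≤ a) (h : ¬ ∃ x ∈ R, x ≤ ρ) :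
    slot b (refresh (ρ :: L) R) < slot a (ρ :: L) := by
  have haρ : ¬ a ≤ ρ := fun haρ => h ⟨b, hb, hba.trans haρ⟩
  rw [refresh_cons_of_not_exists_le L h, slot_cons, if_neg haρ]
  exact Nat.lt_succ_of_le
    (slot_refresh_le (List.mem_of_ne_of_mem (fun h => haρ h.le) ha) hb hba)

/-- One step of a thread. The list `L` is refreshed by `R`, which moves the tracked value `a` down
to `b`; then the refreshed list is replaced by an order-isomorphic copy `L₁`, in which `b` becomes
`a₁`. The copy may not be larger than the original in the shortlex order. -/
structure ThreadStep (L : List O) (R : Finset O) (L₁ : List O) (a b a₁ : O) : Prop where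
  mem_list : a ∈ L
  mem_set : b ∈ R
  le : b ≤ a
  exists_map : ∃ f : O → O, StrictMonoOn f R ∧ L₁ = (refresh L R).map f ∧ a₁ = f b
  not_shortlex : ¬ List.Shortlex (· < ·) (refresh L R) L₁

/-- The refresh of `L` by `R` leaves the head `c` of `L` unchanged. -/
structure HeadKept (c : O) (L : List O) (R : Finset O) : Prop where
  cons_tail : c :: L.tail = L
  refresh_eq : refresh L R = c :: refresh L.tail (R.erase c)

namespace ThreadStep

variable {L L₁ : List O} {R R₁ : Finset O} {a b a₁ c : O}

theorem slot_eq (h : ThreadStep L R L₁ a b a₁) : slot a₁ L₁ = slot b (refresh L R) := by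
  obtain ⟨f, hf, rfl, rfl⟩ := h.exists_map
  exact slot_map hf h.mem_set fun y => mem_refresh.1

theorem slot_le (h : ThreadStep L R L₁ a b a₁) : slot a₁ L₁ ≤ slot a L :=
  h.slot_eq.trans_le (slot_refresh_le h.mem_list h.mem_set h.le)

theorem exists_head_le (h : ThreadStep L R L₁ a b a₁) (hslot : slot a₁ L₁ = slot a L) :
    ∃ ρ M x ρ₁ M₁, L = ρ :: M ∧ refresh L R = x :: refresh M (R.erase x) ∧ L₁ = ρ₁ :: M₁ ∧
      ρ₁ ≤ x ∧ x ≤ ρ := by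
  obtain ⟨ρ, M, rfl⟩ := List.exists_cons_of_ne_nil (List.ne_nil_of_mem h.mem_list)
  have hR : ∃ x ∈ R, x ≤ ρ := by
    by_contra hR
    exact (slot_refresh_lt h.mem_list h.mem_set h.le hR).ne (h.slot_eq.symm.trans hslot)
  obtain ⟨x, hx, hcons⟩ := refresh_cons_of_exists_le M hR
  obtain ⟨f, -, hL₁, -⟩ := h.exists_map
  rw [hcons, List.map_cons] at hL₁
  refine ⟨ρ, M, x, f x, _, rfl, hcons, hL₁, not_lt.1 fun hlt => h.not_shortlex ?_, hx.1.2⟩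
  rw [hcons, hL₁]
  exact .of_lex (by simp) (.rel hlt)

theorem lt_iff_lt (h : ThreadStep L R L₁ a b a₁) (hc : HeadKept c L R) (hc₁ : HeadKept c L₁ R₁) :
    (a₁ < c ↔ b < c) ∧ (c < a₁ ↔ c < b) := by
  obtain ⟨f, hf, hL₁, rfl⟩ := h.exists_map
  have hcR : c ∈ R := mem_refresh.1 (hc.refresh_eq ▸ List.mem_cons_self)
  have hfc : c = f c := by
    rw [hc.refresh_eq, ← hc₁.cons_tail] at hL₁
    exact (List.cons.inj hL₁).1
  constructor
  · rw [← hf.lt_iff_lt h.mem_set hcR, ← hfc]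
  · rw [← hf.lt_iff_lt hcR h.mem_set, ← hfc]

theorem tail (h : ThreadStep L R L₁ a b a₁) (hc : HeadKept c L R) (hc₁ : HeadKept c L₁ R₁)
    (ha : a ≠ c) (ha₁ : a₁ ≠ c) : ThreadStep L.tail (R.erase c) L₁.tail a b a₁ where
  mem_list := List.mem_of_ne_of_mem ha (hc.cons_tail.symm ▸ h.mem_list)
  mem_set := by
    refine Finset.mem_erase.2 ⟨fun hbc => ha₁ ?_, h.mem_set⟩
    have hcmp := h.lt_iff_lt hc hc₁
    rw [hbc] at hcmp
    exact le_antisymm (not_lt.1 (mt hcmp.2.1 (lt_irrefl c))) (not_lt.1 (mt hcmp.1.1 (lt_irrefl c)))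
  le := h.le
  exists_map := by
    obtain ⟨f, hf, hL₁, ha₁⟩ := h.exists_map
    refine ⟨f, hf.mono (Finset.coe_subset.2 (Finset.erase_subset c R)), ?_, ha₁⟩
    rw [hL₁, hc.refresh_eq, List.map_cons, List.tail_cons]
  not_shortlex hlt := h.not_shortlex (by
    rw [hc.refresh_eq, ← hc₁.cons_tail]
    exact hlt.cons)

end ThreadStep

variable {L : ℕ → List O} {R : ℕ → Finset O} {a b : ℕ → O}

theorem exists_eventually_headKept [WellFoundedLT O]
    (h : ∀ᶠ t in atTop, ThreadStep (L t) (R t) (L (t + 1)) (a t) (b t) (a (t + 1))) :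
    ∃ c, ∀ᶠ t in atTop, HeadKept c (L t) (R t) := by
  obtain ⟨n, hn⟩ := exists_eventually_eq_of_eventually_succ_le
    (u := fun t => slot (a t) (L t)) (h.mono fun _ ht => ht.slot_le)
  have hhead : ∀ᶠ t in atTop, ∃ ρ M x ρ₁ M₁, L t = ρ :: M ∧
      refresh (L t) (R t) = x :: refresh M ((R t).erase x) ∧ L (t + 1) = ρ₁ :: M₁ ∧
      ρ₁ ≤ x ∧ x ≤ ρ := by
    filter_upwards [h, hn, (tendsto_add_atTop_nat 1).eventually hn] with t ht hnt hnt₁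
    exact ht.exists_head_le (hnt₁.trans hnt.symm)
  obtain ⟨c, hc⟩ := exists_eventually_eq_of_eventually_succ_le
    (u := fun t => (L t).headD (a 0)) (hhead.mono fun t ⟨ρ, M, x, ρ₁, M₁, hL, _, hL₁, hρ₁, hx⟩ => by
      simpa only [hL, hL₁, List.headD_cons] using hρ₁.trans hx)
  refine ⟨c, ?_⟩
  filter_upwards [hhead, hc, (tendsto_add_atTop_nat 1).eventually hc]
    with t ⟨ρ, M, x, ρ₁, M₁, hL, hrefresh, hL₁, hρ₁, hx⟩ hct hct₁
  simp only [hL, hL₁, List.headD_cons] at hct hct₁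
  obtain rfl : x = c := le_antisymm (hx.trans hct.le) (hct₁.ge.trans hρ₁)
  exact ⟨by rw [hL, hct, List.tail_cons], by rw [hrefresh, hL, List.tail_cons]⟩

/- While the head is kept, a value that has dropped to `c` or below `c` stays there, and one more
strict decrease takes it below `c`. -/
theorem eventually_ne_of_eventually_headKept {c : O}
    (h : ∀ᶠ t in atTop, ThreadStep (L t) (R t) (L (t + 1)) (a t) (b t) (a (t + 1)))
    (hc : ∀ᶠ t in atTop, HeadKept c (L t) (R t)) (hlt : ∃ᶠ t in atTop, b t < a t) :
    ∀ᶠ t in atTop, a t ≠ c := by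
  have hcmp : ∀ᶠ t in atTop, b t ≤ a t ∧ (a (t + 1) < c ↔ b t < c) ∧ (c < a (t + 1) ↔ c < b t) := by
    filter_upwards [h, hc, (tendsto_add_atTop_nat 1).eventually hc] with t ht hct hct₁
    exact ⟨ht.le, ht.lt_iff_lt hct hct₁⟩
  by_cases hle : ∃ᶠ t in atTop, a t ≤ c
  · have hle : ∀ᶠ t in atTop, a t ≤ c :=
      eventually_of_frequently_of_eventually_succ hle <| hcmp.mono fun t ht hat =>
        not_lt.1 fun hca => (ht.2.2.1 hca).not_ge (ht.1.trans hat)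
    have hlt' : ∃ᶠ t in atTop, a (t + 1) < c := (hlt.and_eventually (hcmp.and hle)).mono
      fun t ⟨hba, ht, hat⟩ => ht.2.1.2 (hba.trans_le hat)
    exact (eventually_of_frequently_of_eventually_succ ((tendsto_add_atTop_nat 1).frequently hlt')
      (hcmp.mono fun t ht hat => ht.2.1.2 (ht.1.trans_lt hat))).mono fun t => ne_of_lt
  · exact (not_frequently.1 hle).mono fun t ht hat => ht hat.le

theorem not_frequently_lt_of_threadStep [WellFoundedLT O] {m : ℕ}
    (h : ∀ᶠ t in atTop, ThreadStep (L t) (R t) (L (t + 1)) (a t) (b t) (a (t + 1)))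
    (hm : ∀ t, (L t).length ≤ m) : ¬ ∃ᶠ t in atTop, b t < a t := by
  induction m generalizing L R with
  | zero =>
    obtain ⟨t, ht⟩ := h.exists
    exact absurd (hm t) (List.length_pos_of_mem ht.mem_list).not_ge
  | succ m ih =>
    intro hlt
    obtain ⟨c, hc⟩ := exists_eventually_headKept h
    have hne := eventually_ne_of_eventually_headKept h hc hlt
    refine ih (L := fun t => (L t).tail) (R := fun t => (R t).erase c) ?_ (fun t => ?_) hlt
    · filter_upwards [h, hc, (tendsto_add_atTop_nat 1).eventually hc, hne,
        (tendsto_add_atTop_nat 1).eventually hne] with t ht hct hct₁ hat hat₁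
      exact ht.tail hct hct₁ hat hat₁
    · rw [List.length_tail]
      exact Nat.sub_le_of_le_add (hm t)

end Thread

/-! ### Folding a ranked set to a finite one -/

section Folding

variable {X Q Λ O : Type*} {r : X → Q → O} {lab : X → Λ}

/-- A point of `X` together with the set of its ranks, listed in some order of age. -/
structure AgedNode (r : X → Q → O) where
  base : X
  ranks : List O
  nodup : ranks.Nodup
  mem_ranks : ∀ {y}, y ∈ ranks ↔ ∃ q, r base q = y

namespace AgedNode

theorem exists_getElem?_eq_some (n : AgedNode r) {i : ℕ} (hi : i < n.ranks.length) :
    ∃ q, n.ranks[i]? = some (r n.base q) := by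
  obtain ⟨q, hq⟩ := n.mem_ranks.1 (List.getElem_mem hi)
  exact ⟨q, by rw [List.getElem?_eq_getElem hi, hq]⟩

variable [Fintype Q] [LinearOrder O]

theorem length_le (n : AgedNode r) : n.ranks.length ≤ Fintype.card Q := by
  rw [← List.toFinset_card_of_nodup n.nodup]
  refine (Finset.card_le_card fun y hy => ?_).trans
    (Finset.card_image_le (s := Finset.univ) (f := r n.base))
  rw [List.mem_toFinset, n.mem_ranks] at hy
  simpa only [Finset.mem_image, Finset.mem_univ, true_and] using hy

/-- The node over `x` whose ranks inherit their age from the list `L`. -/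
noncomputable def refreshed (L : List O) (x : X) : AgedNode r where
  base := x
  ranks := refresh L (Finset.univ.image (r x))
  nodup := nodup_refresh _ _
  mem_ranks := by simp [mem_refresh]

/-- The finite information kept about a node: the label, the order of the ranks, and which rank
stands at which place of the list. -/
def code (lab : X → Λ) (n : AgedNode r) :
    Λ × (Q → Q → Prop) × (Fin (Fintype.card Q) → Q → Prop) :=
  (lab n.base, fun q q' => r n.base q < r n.base q', fun i q => n.ranks[i]? = some (r n.base q))

variable {n n' : AgedNode r}

theorem lt_iff_lt_of_code_eq (h : n'.code lab = n.code lab) (q q' : Q) :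
    r n'.base q < r n'.base q' ↔ r n.base q < r n.base q' :=
  iff_of_eq (congrFun₂ (congrArg (fun z => z.2.1) h) q q')

theorem getElem?_eq_some_iff_of_code_eq (h : n'.code lab = n.code lab) {i : ℕ}
    (hi : i < Fintype.card Q) (q : Q) :
    n'.ranks[i]? = some (r n'.base q) ↔ n.ranks[i]? = some (r n.base q) :=
  iff_of_eq (congrFun₂ (congrArg (fun z => z.2.2) h) ⟨i, hi⟩ q)

theorem ranks_eq_map_of_code_eq (h : n'.code lab = n.code lab) {f : O → O}
    (hf : ∀ q, f (r n'.base q) = r n.base q) : n.ranks = n'.ranks.map f := by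
  refine List.ext_getElem? fun i => ?_
  rw [List.getElem?_map]
  by_cases hi' : i < n'.ranks.length
  · obtain ⟨q, hq⟩ := n'.exists_getElem?_eq_some hi'
    rw [hq, Option.map_some, hf,
      (getElem?_eq_some_iff_of_code_eq h (hi'.trans_le n'.length_le) q).1 hq]
  · by_cases hi : i < n.ranks.length
    · obtain ⟨q, hq⟩ := n.exists_getElem?_eq_some hi
      have hq' := (getElem?_eq_some_iff_of_code_eq h (hi.trans_le n.length_le) q).2 hq
      exact absurd (List.getElem?_eq_some_iff.1 hq').1 hi'
    · rw [List.getElem?_eq_none (not_lt.1 hi), List.getElem?_eq_none (not_lt.1 hi'),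
        Option.map_none]

theorem exists_strictMonoOn_of_code_eq (h : n'.code lab = n.code lab) :
    ∃ f : O → O, StrictMonoOn f (Set.range (r n'.base)) ∧ (∀ q, f (r n'.base q) = r n.base q) ∧
      n.ranks = n'.ranks.map f := by
  have hfactors : (r n.base).FactorsThrough (r n'.base) := fun q q' hq => by
    have hlt := lt_iff_lt_of_code_eq h q q'
    have hgt := lt_iff_lt_of_code_eq h q' q
    rw [hq, lt_self_iff_false, false_iff, not_lt] at hlt hgt
    exact le_antisymm hgt hlt
  let f := Function.extend (r n'.base) (r n.base) id
  have hf : ∀ q, f (r n'.base q) = r n.base q := hfactors.extend_apply id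
  refine ⟨f, ?_, hf, ranks_eq_map_of_code_eq h hf⟩
  rintro _ ⟨q, rfl⟩ _ ⟨q', rfl⟩ hlt
  rw [hf, hf]
  exact (lt_iff_lt_of_code_eq h q q').1 hlt

end AgedNode

variable [Fintype Q] [LinearOrder O]

/-- The finite quotient of `X`: the codes of all aged nodes over `X`. -/
def Fold (lab : X → Λ) (r : X → Q → O) : Type _ :=
  Set.range fun n : AgedNode r => n.code lab

namespace Fold

theorem finite [Finite Λ] : Finite (Fold lab r) :=
  inferInstanceAs (Finite (Set.range fun n : AgedNode r => n.code lab))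

theorem card_le [Finite Λ] : Nat.card (Fold lab r) ≤ Nat.card Λ *
    (2 ^ (Fintype.card Q * Fintype.card Q) * 2 ^ (Fintype.card Q * Fintype.card Q)) := by
  refine (Nat.card_le_card_of_injective _ Subtype.val_injective).trans_eq ?_
  simp [Nat.card_prod, Nat.card_fun, ← pow_mul]

variable [WellFoundedLT O]

theorem exists_minimal_node (c : Fold lab r) : ∃ n : AgedNode r, n.code lab = c.1 ∧
    ∀ n' : AgedNode r, n'.code lab = c.1 → ¬ List.Shortlex (· < ·) n'.ranks n.ranks := by
  obtain ⟨n, hn, hmin⟩ := WellFounded.has_min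
    (InvImage.wf (fun n : AgedNode r => n.ranks) (List.Shortlex.wf wellFounded_lt))
    {n | n.code lab = c.1} c.2
  exact ⟨n, hn, fun n' hn' => hmin n' hn'⟩

/-- The representative of a code, with list of ranks minimal in the shortlex order. -/
noncomputable def node (c : Fold lab r) : AgedNode r :=
  c.exists_minimal_node.choose

/-- The point of `X` represented by a code. -/
noncomputable def base (c : Fold lab r) : X :=
  c.node.base

/-- The code of `x`, with the ranks aged according to the representative of `c`. -/
noncomputable def moveTo (c : Fold lab r) (x : X) : Fold lab r :=
  ⟨(AgedNode.refreshed c.node.ranks x).code lab, _, rfl⟩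

theorem code_node (c : Fold lab r) : c.node.code lab = c.1 :=
  c.exists_minimal_node.choose_spec.1

theorem not_shortlex_node {c : Fold lab r} {n : AgedNode r} (h : n.code lab = c.1) :
    ¬ List.Shortlex (· < ·) n.ranks c.node.ranks :=
  c.exists_minimal_node.choose_spec.2 n h

theorem lab_base_moveTo (c : Fold lab r) (x : X) : lab (c.moveTo x).base = lab x :=
  congrArg Prod.fst (c.moveTo x).code_node

theorem exists_lab_base_eq (x : X) : ∃ c : Fold lab r, lab c.base = lab x :=
  let c : Fold lab r := ⟨(AgedNode.refreshed [] x).code lab, _, rfl⟩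
  ⟨c, congrArg Prod.fst c.code_node⟩

theorem threadStep_moveTo (c : Fold lab r) {x : X} {q q' : Q} (h : r x q' ≤ r c.base q) :
    ThreadStep c.node.ranks (Finset.univ.image (r x)) (c.moveTo x).node.ranks
      (r c.base q) (r x q') (r (c.moveTo x).base q') where
  mem_list := c.node.mem_ranks.2 ⟨q, rfl⟩
  mem_set := Finset.mem_image_of_mem _ (Finset.mem_univ q')
  le := h
  exists_map := by
    obtain ⟨f, hmono, hf, hmap⟩ := AgedNode.exists_strictMonoOn_of_code_eq
      (n := (c.moveTo x).node) (n' := .refreshed c.node.ranks x) (c.moveTo x).code_node.symm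
    refine ⟨f, ?_, hmap, (hf q').symm⟩
    rwa [Finset.coe_image, Finset.coe_univ, Set.image_univ]
  not_shortlex := not_shortlex_node (n := .refreshed c.node.ranks x) rfl

theorem not_frequently_rank_lt {c : ℕ → Fold lab r} {x : ℕ → X} {q : ℕ → Q}
    (hc : ∀ t, c (t + 1) = (c t).moveTo (x t))
    (hle : ∀ᶠ t in atTop, r (x t) (q (t + 1)) ≤ r (c t).base (q t)) :
    ¬ ∃ᶠ t in atTop, r (x t) (q (t + 1)) < r (c t).base (q t) := by
  refine not_frequently_lt_of_threadStep (L := fun t => (c t).node.ranks)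
    (R := fun t => Finset.univ.image (r (x t))) (hle.mono fun t ht => ?_)
    fun t => (c t).node.length_le
  simpa only [hc] using (c t).threadStep_moveTo ht

end Fold

end Folding

/-! ### Linear-time truth sets -/

section LinearTime

variable {θ ψ : Form}

/-- Linear-time satisfaction at time `t`. Literals and quantified formulas are treated as atoms:
their truth is read off from the oracle `h`. -/
def LinSat (h : ℕ → Form → Prop) : Form → ℕ → Prop
  | .tt => fun _ => True
  | .ff => fun _ => False
  | .or a b => fun t => LinSat h a t ∨ LinSat h b t
  | .and a b => fun t => LinSat h a t ∧ LinSat h b t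
  | .next a => fun t => LinSat h a (t + 1)
  | .unt a b => UntilAt (LinSat h a) (LinSat h b)
  | .rel a b => ReleaseAt (LinSat h a) (LinSat h b)
  | ψ => fun t => h t ψ

/-- The truth value of a formula computed from the current truth values `K` and the truth values
`K'` at the next position by unfolding the formula once. -/
def expand (h K K' : Form → Prop) : Form → Prop
  | .tt => True
  | .ff => False
  | .or a b => K a ∨ K b
  | .and a b => K a ∧ K b
  | .next a => K' a
  | .unt a b => K b ∨ K a ∧ K' (.unt a b)
  | .rel a b => K b ∧ (K a ∨ K' (.rel a b))
  | ψ => h ψ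

theorem linSat_iff_expand {h : ℕ → Form → Prop} {t : ℕ} :
    LinSat h ψ t ↔ expand (h t) (LinSat h · t) (LinSat h · (t + 1)) ψ := by
  cases ψ
  case unt => exact untilAt_iff
  case rel => exact releaseAt_iff
  all_goals exact Iff.rfl

theorem expand_congr {h K K' L L' : Form → Prop} (hK : ∀ χ ∈ ψ.subf, K χ ↔ L χ)
    (hK' : ∀ χ ∈ ψ.subf, K' χ ↔ L' χ) : expand h K K' ψ ↔ expand h L L' ψ := by
  have hmem := ψ.mem_subf_self
  cases ψ with
  | tt | ff | prop | nprop | ex | al => exact Iff.rfl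
  | next a => exact hK' a (Finset.mem_insert_of_mem a.mem_subf_self)
  | or a b | and a b | unt a b | rel a b =>
    simp only [expand, hK' _ hmem,
      hK a (Finset.mem_insert_of_mem (Finset.mem_union_left _ a.mem_subf_self)),
      hK b (Finset.mem_insert_of_mem (Finset.mem_union_right _ b.mem_subf_self))]

/-- Sets of subformulas of `θ`, thought of as those that are true at some position. -/
abbrev TruthSet (θ : Form) : Type :=
  θ.subf.powerset

namespace TruthSet

open scoped Classical in
/-- The set of subformulas of `θ` with property `p`. -/
noncomputable def of (θ : Form) (p : Form → Prop) : TruthSet θ :=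
  ⟨θ.subf.filter p, Finset.mem_powerset.2 (Finset.filter_subset _ _)⟩

theorem mem_of {p : Form → Prop} (hψ : ψ ∈ θ.subf) : ψ ∈ (of θ p).1 ↔ p ψ := by
  simp only [of, Finset.mem_filter, hψ, true_and]

theorem ext {K K' : TruthSet θ} (h : ∀ ψ ∈ θ.subf, ψ ∈ K.1 ↔ ψ ∈ K'.1) : K = K' :=
  Subtype.ext <| Finset.ext fun ψ =>
    ⟨fun hψ => (h ψ (Finset.mem_powerset.1 K.2 hψ)).1 hψ,
      fun hψ => (h ψ (Finset.mem_powerset.1 K'.2 hψ)).2 hψ⟩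

end TruthSet

/-- The truth sets `K` and `K'` can occur at successive positions, the first of which has the true
atoms `h`. -/
def Consistent (θ : Form) (h : Form → Prop) (K K' : TruthSet θ) : Prop :=
  ∀ ψ ∈ θ.subf, ψ ∈ K.1 ↔ expand h (· ∈ K.1) (· ∈ K'.1) ψ

/-- The until formula that is true, or the release formula that is false, according to `K` has no
present witness for it. -/
def Pending (K : TruthSet θ) : Form → Prop
  | .unt a b => .unt a b ∈ K.1 ∧ b ∉ K.1
  | .rel a b => .rel a b ∉ K.1 ∧ b ∈ K.1
  | _ => False

/-- A consistent sequence of truth sets in which no formula is pending forever. -/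
structure IsTruthStream (θ : Form) (h : ℕ → Form → Prop) (K : ℕ → TruthSet θ) : Prop where
  consistent : ∀ t, Consistent θ (h t) (K t) (K (t + 1))
  fair : ∀ e : θ.subf, ∃ᶠ t in atTop, ¬ Pending (K t) e

/-- The set of subformulas of `θ` that are true at time `t`. -/
noncomputable def linTruth (θ : Form) (h : ℕ → Form → Prop) (t : ℕ) : TruthSet θ :=
  .of θ (LinSat h · t)

theorem mem_linTruth {h : ℕ → Form → Prop} {t : ℕ} (hψ : ψ ∈ θ.subf) :
    ψ ∈ (linTruth θ h t).1 ↔ LinSat h ψ t :=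
  TruthSet.mem_of hψ

theorem Consistent.left_unique {h : Form → Prop} {K₁ K₂ K' : TruthSet θ}
    (h₁ : Consistent θ h K₁ K') (h₂ : Consistent θ h K₂ K') : K₁ = K₂ := by
  have main : ∀ ψ : Form, ψ.subf ⊆ θ.subf → (ψ ∈ K₁.1 ↔ ψ ∈ K₂.1) := by
    intro ψ hψ
    rw [h₁ ψ (hψ ψ.mem_subf_self), h₂ ψ (hψ ψ.mem_subf_self)]
    induction ψ with
    | tt | ff | prop | nprop | next | ex | al => exact Iff.rfl
    | or a b iha ihb | and a b iha ihb | unt a b iha ihb | rel a b iha ihb =>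
      obtain ⟨ha, hb⟩ := Finset.union_subset_iff.1 (Finset.insert_subset_iff.1 hψ).2
      have hKa := (h₁ a (ha a.mem_subf_self)).trans
        ((iha ha).trans (h₂ a (ha a.mem_subf_self)).symm)
      have hKb := (h₁ b (hb b.mem_subf_self)).trans
        ((ihb hb).trans (h₂ b (hb b.mem_subf_self)).symm)
      simp only [expand, hKa, hKb]
  exact TruthSet.ext fun ψ hψ => main ψ (Form.subf_subset_of_mem hψ)

theorem isTruthStream_linTruth (θ : Form) (h : ℕ → Form → Prop) :
    IsTruthStream θ h (linTruth θ h) where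
  consistent t ψ hψ := by
    have hsub := Form.subf_subset_of_mem hψ
    rw [mem_linTruth hψ, linSat_iff_expand]
    exact expand_congr (fun χ hχ => (mem_linTruth (hsub hχ)).symm)
      fun χ hχ => (mem_linTruth (hsub hχ)).symm
  fair := by
    rintro ⟨e, he⟩
    have hsub := Form.subf_subset_of_mem he
    cases e with
    | unt a b =>
      have hb : b ∈ θ.subf := hsub (by simp [Form.subf, Form.mem_subf_self])
      simpa only [Pending, LinSat, mem_linTruth he, mem_linTruth hb, not_and_not_right]
        using frequently_untilAt_imp (p := LinSat h a) (q := LinSat h b)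
    | rel a b =>
      have hb : b ∈ θ.subf := hsub (by simp [Form.subf, Form.mem_subf_self])
      simpa only [Pending, LinSat, mem_linTruth he, mem_linTruth hb, not_and', not_not]
        using frequently_imp_releaseAt (p := LinSat h a) (q := LinSat h b)
    | _ => exact Frequently.of_forall fun _ => id

namespace IsTruthStream

variable {h : ℕ → Form → Prop} {K : ℕ → TruthSet θ}

theorem mem_iff_linSat (hK : IsTruthStream θ h K) (hψ : ψ.subf ⊆ θ.subf) (t : ℕ) :
    ψ ∈ (K t).1 ↔ LinSat h ψ t := by
  induction ψ generalizing t with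
  | tt | ff | prop | nprop | ex | al =>
    exact hK.consistent t _ (hψ (Form.mem_subf_self _))
  | next a iha =>
    obtain ⟨hmem, ha⟩ := Finset.insert_subset_iff.1 hψ
    exact (hK.consistent t _ hmem).trans (iha ha _)
  | or a b iha ihb | and a b iha ihb =>
    obtain ⟨hmem, hab⟩ := Finset.insert_subset_iff.1 hψ
    obtain ⟨ha, hb⟩ := Finset.union_subset_iff.1 hab
    simpa only [expand, LinSat, iha ha, ihb hb] using hK.consistent t _ hmem
  | unt a b iha ihb =>
    obtain ⟨hmem, hab⟩ := Finset.insert_subset_iff.1 hψ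
    obtain ⟨ha, hb⟩ := Finset.union_subset_iff.1 hab
    refine iff_untilAt_of_fixpoint (u := fun s => Form.unt a b ∈ (K s).1)
      (fun s => ?_) ((hK.fair ⟨_, hmem⟩).mono fun s hs => ?_) t
    · simpa only [expand, iha ha, ihb hb] using hK.consistent s _ hmem
    · simpa only [Pending, not_and_not_right, ihb hb] using hs
  | rel a b iha ihb =>
    obtain ⟨hmem, hab⟩ := Finset.insert_subset_iff.1 hψ
    obtain ⟨ha, hb⟩ := Finset.union_subset_iff.1 hab
    refine iff_releaseAt_of_fixpoint (u := fun s => Form.rel a b ∈ (K s).1)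
      (fun s => ?_) ((hK.fair ⟨_, hmem⟩).mono fun s hs => ?_) t
    · simpa only [expand, iha ha, ihb hb] using hK.consistent s _ hmem
    · simpa only [Pending, not_and', not_not, ihb hb] using hs

theorem eq_linTruth (hK : IsTruthStream θ h K) (t : ℕ) : K t = linTruth θ h t :=
  TruthSet.ext fun _ hψ =>
    (hK.mem_iff_linSat (Form.subf_subset_of_mem hψ) t).trans (mem_linTruth hψ).symm

end IsTruthStream

end LinearTime

/-! ### Rounds -/

section Rounds

variable {ι : Type*} [Fintype ι] [DecidableEq ι]

/-- One step of the round counter that turns a generalised Büchi condition into a single one: `W`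
collects the indices met since the current round began, `N` are the indices met now, and a new
round starts once all indices have been met. -/
def advanceRound (W N : Finset ι) : Finset ι :=
  if W ∪ N = Finset.univ then ∅ else W ∪ N

theorem frequently_union_eq_univ_iff {W N : ℕ → Finset ι}
    (hW : ∀ t, W (t + 1) = advanceRound (W t) (N t)) :
    (∃ᶠ t in atTop, W t ∪ N t = Finset.univ) ↔ ∀ i, ∃ᶠ t in atTop, i ∈ N t := by
  refine ⟨fun hround i => ?_, fun hN hround => ?_⟩
  · by_contra hi
    rw [not_frequently] at hi
    have hreset : ∃ᶠ t in atTop, i ∉ W t := (tendsto_add_atTop_nat 1).frequently <|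
      hround.mono fun t ht => by simp only [hW, advanceRound, if_pos ht, Finset.notMem_empty,
        not_false_eq_true]
    have hout : ∀ᶠ t in atTop, i ∉ W t :=
      eventually_of_frequently_of_eventually_succ hreset <| hi.mono fun t hNt hWt => by
        rw [hW, advanceRound]
        split_ifs <;> simp [hNt, hWt]
    obtain ⟨t, ht, hWt, hNt⟩ := (hround.and_eventually (hout.and hi)).exists
    exact (Finset.mem_union.1 (ht ▸ Finset.mem_univ i)).elim hWt hNt
  · have hstep : ∀ᶠ t in atTop, W (t + 1) = W t ∪ N t :=
      hround.mono fun t ht => by rw [hW, advanceRound, if_neg ht]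
    have hall : ∀ᶠ t in atTop, ∀ i, i ∈ W t := eventually_all.2 fun i =>
      eventually_of_frequently_of_eventually_succ
        ((tendsto_add_atTop_nat 1).frequently <|
          ((hN i).and_eventually hstep).mono fun t ht => by simp [ht.2, ht.1])
        (hstep.mono fun t ht hi => by simp [ht, hi])
    obtain ⟨t, ht, hnot⟩ := (hall.and hround).exists
    exact hnot (Finset.eq_univ_of_forall fun i => Finset.mem_union_left _ (ht i))

end Rounds

/-! ### Truth sets of paths -/

section Paths

variable {S : Type} {T : TS S} {θ ψ : Form} {v w : S} {K K' : TruthSet θ}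

/-- Truth of literals and quantified formulas at a state. It provides the oracle of `LinSat` along
a path; the value at other formulas is irrelevant. -/
def AtomHolds (T : TS S) (v : S) : Form → Prop
  | .prop p => p ∈ T.label v
  | .nprop p => p ∉ T.label v
  | .ex a => ∃ π : T.Path, π.seq 0 = v ∧ Sat T π a
  | .al a => ∀ π : T.Path, π.seq 0 = v → Sat T π a
  | _ => False

theorem sat_suffix_iff_linSat {π : T.Path} {h : ℕ → Form → Prop}
    (hh : ∀ χ ∈ ψ.subf, ∀ s, AtomHolds T (π.seq s) χ ↔ h s χ) (t : ℕ) :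
    Sat T (π.suffix t) ψ ↔ LinSat h ψ t := by
  induction ψ generalizing t with
  | tt | ff => exact Iff.rfl
  | prop | nprop | ex | al => exact hh _ (Form.mem_subf_self _) t
  | next a iha =>
    rw [Sat, π.suffix_suffix]
    exact iha (fun χ hχ => hh χ (Finset.mem_insert_of_mem hχ)) (t + 1)
  | or a b iha ihb | and a b iha ihb | unt a b iha ihb | rel a b iha ihb =>
    have ha := iha fun χ hχ => hh χ (Finset.mem_insert_of_mem (Finset.mem_union_left _ hχ))
    have hb := ihb fun χ hχ => hh χ (Finset.mem_insert_of_mem (Finset.mem_union_right _ hχ))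
    simp only [Sat, LinSat, UntilAt, ReleaseAt, π.suffix_suffix, ha, hb]

/-- The set of subformulas of `θ` that are true on a path. -/
noncomputable def pathTruth (θ : Form) (π : T.Path) : TruthSet θ :=
  .of θ (Sat T π)

theorem mem_pathTruth {π : T.Path} (hψ : ψ ∈ θ.subf) : ψ ∈ (pathTruth θ π).1 ↔ Sat T π ψ :=
  TruthSet.mem_of hψ

theorem pathTruth_suffix (θ : Form) (π : T.Path) (t : ℕ) :
    pathTruth θ (π.suffix t) = linTruth θ (fun s => AtomHolds T (π.seq s)) t :=
  TruthSet.ext fun _ hψ => by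
    rw [mem_pathTruth hψ, mem_linTruth hψ, sat_suffix_iff_linSat fun _ _ _ => Iff.rfl]

theorem isTruthStream_pathTruth (θ : Form) (π : T.Path) :
    IsTruthStream θ (fun t => AtomHolds T (π.seq t)) fun t => pathTruth θ (π.suffix t) := by
  simpa only [pathTruth_suffix] using isTruthStream_linTruth θ fun s => AtomHolds T (π.seq s)

theorem consistent_pathTruth (θ : Form) (π : T.Path) :
    Consistent θ (AtomHolds T (π.seq 0)) (pathTruth θ π) (pathTruth θ (π.suffix 1)) := by
  simpa only [π.suffix_zero] using (isTruthStream_pathTruth θ π).consistent 0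

/-- The truth set `K` is that of some path from the state `v`. -/
def Realizable (θ : Form) (T : TS S) (v : S) (K : TruthSet θ) : Prop :=
  ∃ π : T.Path, π.seq 0 = v ∧ pathTruth θ π = K

theorem realizable_pathTruth (θ : Form) (π : T.Path) :
    Realizable θ T (π.seq 0) (pathTruth θ π) :=
  ⟨π, rfl, rfl⟩

theorem realizable_of_step (hvw : T.step v w) (hK : Consistent θ (AtomHolds T v) K K')
    (hK' : Realizable θ T w K') : Realizable θ T v K := by
  obtain ⟨π', rfl, rfl⟩ := hK'
  obtain ⟨π, rfl, rfl⟩ := TS.Path.exists_suffix_one_eq hvw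
  exact ⟨π, rfl, (consistent_pathTruth θ π).left_unique hK⟩

theorem atomHolds_ex_iff {a : Form} (ha : a ∈ θ.subf) :
    AtomHolds T v (.ex a) ↔ ∃ K, Realizable θ T v K ∧ a ∈ K.1 := by
  simp only [AtomHolds, Realizable, ← mem_pathTruth ha]
  exact ⟨fun ⟨π, hπ, h⟩ => ⟨_, ⟨π, hπ, rfl⟩, h⟩, fun ⟨_, ⟨π, hπ, rfl⟩, h⟩ => ⟨π, hπ, h⟩⟩

theorem atomHolds_al_iff {a : Form} (ha : a ∈ θ.subf) :
    AtomHolds T v (.al a) ↔ ∀ K, Realizable θ T v K → a ∈ K.1 := by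
  simp only [AtomHolds, Realizable, ← mem_pathTruth ha]
  exact ⟨fun h _ ⟨π, hπ, hK⟩ => hK ▸ h π hπ, fun h π hπ => h _ ⟨π, hπ, rfl⟩⟩

open scoped Classical in
/-- A path from the same state as `π` that realizes `K`, if there is one; it is `π` itself if `π`
realizes `K`, so that following one's own truth set means staying on the path. -/
noncomputable def witness (π : T.Path) (K : TruthSet θ) : T.Path :=
  if h : Realizable θ T (π.seq 0) K ∧ pathTruth θ π ≠ K then h.1.choose else π

theorem witness_seq_zero (π : T.Path) (K : TruthSet θ) : (witness π K).seq 0 = π.seq 0 := by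
  rw [witness]
  split_ifs with h
  exacts [h.1.choose_spec.1, rfl]

theorem pathTruth_witness {π : T.Path} (hK : Realizable θ T (π.seq 0) K) :
    pathTruth θ (witness π K) = K := by
  rw [witness]
  split_ifs with h
  · exact h.1.choose_spec.2
  · exact not_not.1 fun hne => h ⟨hK, hne⟩

theorem witness_pathTruth (θ : Form) (π : T.Path) : witness π (pathTruth θ π) = π :=
  dif_neg fun h => h.2 rfl

theorem step_witness (π : T.Path) (K : TruthSet θ) :
    T.step (π.seq 0) (((witness π K).suffix 1).seq 0) := by
  rw [← witness_seq_zero π K]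
  exact (witness π K).valid 0

end Paths

/-! ### Ranks of paths -/

section PathRank

variable {S : Type} {T : TS S} {θ : Form}

/-- The number of steps until `e` is not pending. -/
noncomputable def delay (θ : Form) (e : Form) (π : T.Path) : ℕ :=
  sInf {k | ¬ Pending (pathTruth θ (π.suffix k)) e}

theorem delay_suffix_one_lt {e : θ.subf} {π : T.Path} (he : Pending (pathTruth θ π) e) :
    delay θ e (π.suffix 1) < delay θ e π := by
  have hmem : ¬ Pending (pathTruth θ (π.suffix (delay θ e π))) e :=
    Nat.sInf_mem ((isTruthStream_pathTruth θ π).fair e).exists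
  rcases hd : delay θ e π with _ | k <;> rw [hd] at hmem
  · rw [π.suffix_zero] at hmem
    exact absurd he hmem
  · refine Nat.lt_succ_of_le (Nat.sInf_le ?_)
    rwa [Set.mem_ofPred_eq, π.suffix_suffix, Nat.add_comm]

open scoped Classical in
/-- The subformulas of `θ` that are not pending in `K`. -/
noncomputable def settled (K : TruthSet θ) : Finset θ.subf :=
  {e | ¬ Pending K e}

theorem mem_settled {K : TruthSet θ} {e : θ.subf} : e ∈ settled K ↔ ¬ Pending K e := by
  simp only [settled, Finset.mem_filter, Finset.mem_univ, true_and]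

/-- One step of an attempt to build a path with an unrealizable truth set: the third component
counts the rounds that witness the fairness of the attempt. -/
structure Attempt (θ : Form) (T : TS S) (x y : S × TruthSet θ × Finset θ.subf) : Prop where
  step : T.step x.1 y.1
  consistent : Consistent θ (AtomHolds T x.1) x.2.1 y.2.1
  not_realizable : ¬ Realizable θ T x.1 x.2.1
  round : y.2.2 = advanceRound x.2.2 (settled x.2.1)

theorem Attempt.not_frequently_round {y : ℕ → S × TruthSet θ × Finset θ.subf}
    (hy : ∀ t, Attempt θ T (y t) (y (t + 1))) :
    ¬ ∃ᶠ t in atTop, (y t).2.2 ∪ settled (y t).2.1 = Finset.univ := by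
  intro hround
  have hfair := (frequently_union_eq_univ_iff fun t => (hy t).round).1 hround
  have hstream : IsTruthStream θ (fun t => AtomHolds T (y t).1) fun t => (y t).2.1 :=
    ⟨fun t => (hy t).consistent, fun e => (hfair e).mono fun _ => mem_settled.1⟩
  let π : T.Path := ⟨fun t => (y t).1, fun t => (hy t).step⟩
  refine (hy 0).not_realizable ⟨π, rfl, ?_⟩
  rw [← π.suffix_zero, pathTruth_suffix]
  exact (hstream.eq_linTruth 0).symm

theorem exists_attempt_rank (θ : Form) (T : TS S) :
    ∃ r : S × TruthSet θ × Finset θ.subf → Ordinal.{0}, ∀ x y, Attempt θ T x y →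
      r y ≤ r x ∧ (x.2.2 ∪ settled x.2.1 = Finset.univ → r y < r x) :=
  exists_ordinal_rank fun _ => Attempt.not_frequently_round

/-- A rank that does not increase along attempts and decreases when a round is completed. -/
noncomputable def attemptRank (θ : Form) (T : TS S) :
    S × TruthSet θ × Finset θ.subf → Ordinal.{0} :=
  (exists_attempt_rank θ T).choose

/-- The ranks of a path: those of the attempts from its first state, and the delays of pending
formulas. -/
noncomputable def pathRank (θ : Form) (T : TS S) (π : T.Path) :
    (TruthSet θ × Finset θ.subf) ⊕ θ.subf → Ordinal.{0} :=
  Sum.elim (fun x => attemptRank θ T (π.seq 0, x)) fun e => delay θ e π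

theorem pathRank_inl_le_and_lt {π π' : T.Path} {K K' : TruthSet θ} {W W' : Finset θ.subf}
    (h : Attempt θ T (π.seq 0, K, W) (π'.seq 0, K', W')) :
    pathRank θ T π' (.inl (K', W')) ≤ pathRank θ T π (.inl (K, W)) ∧
      (W ∪ settled K = Finset.univ →
        pathRank θ T π' (.inl (K', W')) < pathRank θ T π (.inl (K, W))) :=
  (exists_attempt_rank θ T).choose_spec _ _ h

theorem pathRank_inr_lt {π : T.Path} {e : θ.subf} (he : Pending (pathTruth θ π) e) :
    pathRank θ T (π.suffix 1) (.inr e) < pathRank θ T π (.inr e) :=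
  Nat.cast_lt.2 (delay_suffix_one_lt he)

/-- The truth set of a path together with all truth sets realizable at its first state. -/
noncomputable def pathType (θ : Form) (π : T.Path) : TruthSet θ × Set (TruthSet θ) :=
  (pathTruth θ π, {K | Realizable θ T (π.seq 0) K})

end PathRank

/-! ### The folded transition system -/

section FoldedTS

variable {S : Type} {T : TS S} {θ : Form}

/-- The states of the small model: the paths of `T`, folded so as to keep their types and enough
about their ranks. -/
abbrev FoldedState (θ : Form) (T : TS S) : Type :=
  Fold (pathType (T := T) θ) (pathRank θ T)

namespace FoldedState

/-- The state reached from `c` by one step along the witness for the truth set `K`. -/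
noncomputable def follow (c : FoldedState θ T) (K : TruthSet θ) : FoldedState θ T :=
  c.moveTo ((witness c.base K).suffix 1)

/-- The state of `T` that the folded state `c` stands for. -/
noncomputable def vertex (c : FoldedState θ T) : S :=
  c.base.seq 0

theorem pathTruth_base_follow (c : FoldedState θ T) (K : TruthSet θ) :
    pathTruth θ (c.follow K).base = pathTruth θ ((witness c.base K).suffix 1) :=
  congrArg Prod.fst (c.lab_base_moveTo _)

theorem realizable_vertex_follow (c : FoldedState θ T) (K : TruthSet θ) {K' : TruthSet θ} :
    Realizable θ T (c.follow K).vertex K' ↔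
      Realizable θ T (((witness c.base K).suffix 1).seq 0) K' :=
  Set.ext_iff.1 (congrArg Prod.snd (c.lab_base_moveTo ((witness c.base K).suffix 1))) K'

theorem consistent_follow {c : FoldedState θ T} {K : TruthSet θ}
    (hK : Realizable θ T c.vertex K) :
    Consistent θ (AtomHolds T c.vertex) K (pathTruth θ (c.follow K).base) := by
  have hcons := consistent_pathTruth θ (witness c.base K)
  rwa [pathTruth_witness hK, witness_seq_zero, ← pathTruth_base_follow] at hcons

variable {c : ℕ → FoldedState θ T} {d : ℕ → TruthSet θ}

theorem realizable_linTruth (hc : ∀ t, c (t + 1) = (c t).follow (d t)) :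
    Realizable θ T (c 0).vertex (linTruth θ (fun t => AtomHolds T (c t).vertex) 0) := by
  by_contra hnot₀
  let K := linTruth θ fun t => AtomHolds T (c t).vertex
  have hK : IsTruthStream θ _ K := isTruthStream_linTruth θ _
  have hnot : ∀ t, ¬ Realizable θ T (c t).vertex (K t) := by
    intro t
    induction t with
    | zero => exact hnot₀
    | succ t ih =>
      rw [hc, realizable_vertex_follow]
      exact fun h => ih (realizable_of_step (step_witness _ _) (hK.consistent t) h)
  let W : ℕ → Finset θ.subf := fun t => t.rec ∅ fun s V => advanceRound V (settled (K s))
  have hround : ∃ᶠ t in atTop, W t ∪ settled (K t) = Finset.univ :=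
    (frequently_union_eq_univ_iff fun _ => rfl).2 fun e =>
      (hK.fair e).mono fun _ => mem_settled.2
  have hattempt : ∀ t, Attempt θ T ((c t).vertex, K t, W t)
      (((witness (c t).base (d t)).suffix 1).seq 0, K (t + 1), W (t + 1)) := fun t =>
    ⟨step_witness _ _, hK.consistent t, hnot t, rfl⟩
  exact Fold.not_frequently_rank_lt (q := fun t => .inl (K t, W t)) hc
    (.of_forall fun t => (pathRank_inl_le_and_lt (hattempt t)).1)
    (hround.mono fun t => (pathRank_inl_le_and_lt (hattempt t)).2)

theorem isTruthStream_follow (hc : ∀ t, c (t + 1) = (c t).follow (d t))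
    (hd₀ : Realizable θ T (c 0).vertex (d 0))
    (hd : ∀ t, d (t + 1) = pathTruth θ (c (t + 1)).base) :
    IsTruthStream θ (fun t => AtomHolds T (c t).vertex) d where
  consistent t := by
    have hdt : Realizable θ T (c t).vertex (d t) := by
      cases t with
      | zero => exact hd₀
      | succ t => exact hd t ▸ realizable_pathTruth θ (c (t + 1)).base
    rw [hd, hc]
    exact consistent_follow hdt
  fair e := by
    by_contra hpending
    have hlt : ∀ᶠ t in atTop, pathRank θ T ((witness (c t).base (d t)).suffix 1) (.inr e) <
        pathRank θ T (c t).base (.inr e) := by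
      filter_upwards [not_frequently.1 hpending, eventually_ge_atTop 1] with t ht hpos
      obtain ⟨s, rfl⟩ := Nat.exists_eq_add_of_le' hpos
      rw [hd, not_not] at ht
      rw [hd, witness_pathTruth]
      exact pathRank_inr_lt ht
    exact Fold.not_frequently_rank_lt (q := fun _ => .inr e) hc (hlt.mono fun _ h => h.le)
      hlt.frequently

end FoldedState

/-- The transition system on the folded states in which one can follow any truth set. -/
noncomputable def foldedTS (c₀ : FoldedState θ T) : TS (FoldedState θ T) where
  init := c₀
  step c c' := ∃ K, c' = c.follow K
  total c := ⟨_, pathTruth θ c.base, rfl⟩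
  label c := T.label c.vertex

variable {c₀ : FoldedState θ T}

theorem exists_path_linTruth_eq {c : FoldedState θ T} {K : TruthSet θ}
    (hK : Realizable θ T c.vertex K) : ∃ σ : (foldedTS c₀).Path, σ.seq 0 = c ∧
      linTruth θ (fun t => AtomHolds T (σ.seq t).vertex) 0 = K := by
  let x : ℕ → FoldedState θ T × TruthSet θ := fun t =>
    t.rec (c, K) fun _ y => (y.1.follow y.2, pathTruth θ (y.1.follow y.2).base)
  have hx := FoldedState.isTruthStream_follow (c := fun t => (x t).1) (d := fun t => (x t).2)
    (fun _ => rfl) hK fun _ => rfl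
  exact ⟨⟨fun t => (x t).1, fun t => ⟨(x t).2, rfl⟩⟩, rfl, (hx.eq_linTruth 0).symm⟩

theorem realizable_vertex_iff {c : FoldedState θ T} {K : TruthSet θ} :
    Realizable θ T c.vertex K ↔ ∃ σ : (foldedTS c₀).Path, σ.seq 0 = c ∧
      linTruth θ (fun t => AtomHolds T (σ.seq t).vertex) 0 = K := by
  refine ⟨exists_path_linTruth_eq, ?_⟩
  rintro ⟨σ, rfl, rfl⟩
  choose d hd using σ.valid
  exact FoldedState.realizable_linTruth hd

theorem sat_foldedTS_iff {ψ : Form} (hψ : ψ ∈ θ.subf)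
    (h : ∀ χ ∈ ψ.subf, ∀ c, AtomHolds (foldedTS c₀) c χ ↔ AtomHolds T c.vertex χ)
    (σ : (foldedTS c₀).Path) :
    Sat (foldedTS c₀) σ ψ ↔ ψ ∈ (linTruth θ (fun t => AtomHolds T (σ.seq t).vertex) 0).1 := by
  rw [mem_linTruth hψ, ← sat_suffix_iff_linSat (π := σ) fun χ hχ t => h χ hχ (σ.seq t),
    σ.suffix_zero]

theorem atomHolds_foldedTS_ex_iff {a : Form} (ha : a ∈ θ.subf)
    (h : ∀ χ ∈ a.subf, ∀ c, AtomHolds (foldedTS c₀) c χ ↔ AtomHolds T c.vertex χ)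
    (c : FoldedState θ T) : AtomHolds (foldedTS c₀) c (.ex a) ↔ AtomHolds T c.vertex (.ex a) := by
  rw [atomHolds_ex_iff (v := c.vertex) ha]
  constructor
  · rintro ⟨σ, rfl, hσ⟩
    exact ⟨_, realizable_vertex_iff.2 ⟨σ, rfl, rfl⟩, (sat_foldedTS_iff ha h σ).1 hσ⟩
  · rintro ⟨K, hK, haK⟩
    obtain ⟨σ, rfl, rfl⟩ := (realizable_vertex_iff (c₀ := c₀)).1 hK
    exact ⟨σ, rfl, (sat_foldedTS_iff ha h σ).2 haK⟩

theorem atomHolds_foldedTS_al_iff {a : Form} (ha : a ∈ θ.subf)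
    (h : ∀ χ ∈ a.subf, ∀ c, AtomHolds (foldedTS c₀) c χ ↔ AtomHolds T c.vertex χ)
    (c : FoldedState θ T) : AtomHolds (foldedTS c₀) c (.al a) ↔ AtomHolds T c.vertex (.al a) := by
  rw [atomHolds_al_iff (v := c.vertex) ha]
  constructor
  · intro hc K hK
    obtain ⟨σ, rfl, rfl⟩ := (realizable_vertex_iff (c₀ := c₀)).1 hK
    exact (sat_foldedTS_iff ha h σ).1 (hc σ rfl)
  · rintro hK σ rfl
    exact (sat_foldedTS_iff ha h σ).2 (hK _ (realizable_vertex_iff.2 ⟨σ, rfl, rfl⟩))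

theorem atomHolds_foldedTS_iff {ψ : Form} (hψ : ψ.subf ⊆ θ.subf) :
    ∀ χ ∈ ψ.subf, ∀ c, AtomHolds (foldedTS c₀) c χ ↔ AtomHolds T c.vertex χ := by
  induction ψ with
  | tt | ff | prop | nprop =>
    intro χ hχ c
    rw [Finset.mem_singleton.1 hχ]
    exact Iff.rfl
  | or a b iha ihb | and a b iha ihb | unt a b iha ihb | rel a b iha ihb =>
    obtain ⟨ha, hb⟩ := Finset.union_subset_iff.1 (Finset.insert_subset_iff.1 hψ).2
    exact (Finset.forall_mem_insert _ _ _).2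
      ⟨fun _ => Iff.rfl, Finset.forall_mem_union.2 ⟨iha ha, ihb hb⟩⟩
  | next a iha =>
    have ha := (Finset.insert_subset_iff.1 hψ).2
    exact (Finset.forall_mem_insert _ _ _).2 ⟨fun _ => Iff.rfl, iha ha⟩
  | ex a iha =>
    have ha := (Finset.insert_subset_iff.1 hψ).2
    exact (Finset.forall_mem_insert _ _ _).2
      ⟨atomHolds_foldedTS_ex_iff (ha a.mem_subf_self) (iha ha), iha ha⟩
  | al a iha =>
    have ha := (Finset.insert_subset_iff.1 hψ).2
    exact (Finset.forall_mem_insert _ _ _).2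
      ⟨atomHolds_foldedTS_al_iff (ha a.mem_subf_self) (iha ha), iha ha⟩

theorem ncard_foldedTS_step_le (c : FoldedState θ T) :
    {c' | (foldedTS c₀).step c c'}.ncard ≤ 2 ^ θ.subf.card := by
  have hrange : {c' | (foldedTS c₀).step c c'} = Set.range c.follow :=
    Set.ext fun c' => exists_congr fun K => eq_comm
  rw [hrange, ← Set.image_univ]
  refine (Set.ncard_image_le Set.finite_univ).trans_eq ?_
  rw [Set.ncard_univ, Nat.card_eq_fintype_card, Fintype.card_coe, Finset.card_powerset]

end FoldedTS

/-! ### The size of the model -/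

theorem two_mul_add_two_mul_sq_le_pow_eight {k n : ℕ} (hk : 2 ≤ k) (hn : n ≤ k) :
    2 * k + 2 * (k * k + n) ^ 2 ≤ k ^ 8 := by
  have hq : k * k + n ≤ k ^ 3 := by nlinarith
  calc 2 * k + 2 * (k * k + n) ^ 2
      ≤ 2 * k ^ 6 + 2 * (k ^ 3) ^ 2 := by
        gcongr
        exact Nat.le_self_pow (by norm_num) k
    _ = 2 * 2 * k ^ 6 := by ring
    _ ≤ k * k * k ^ 6 := by gcongr
    _ = k ^ 8 := by ring

theorem card_foldedState_le {S : Type} (θ : Form) (T : TS S) :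
    Nat.card (FoldedState θ T) ≤ 2 ^ 2 ^ (8 * θ.subf.card) := by
  have hpos : θ.subf.card ≠ 0 := Finset.card_ne_zero_of_mem θ.mem_subf_self
  set n := θ.subf.card with hn
  set k := 2 ^ n with hk
  have hcard : Nat.card (TruthSet θ × Set (TruthSet θ)) = k * 2 ^ k := by simp [hk, hn]
  have hcardQ : Fintype.card ((TruthSet θ × Finset θ.subf) ⊕ θ.subf) = k * k + n := by
    simp [hk, hn]
  calc Nat.card (FoldedState θ T)
      ≤ k * 2 ^ k * (2 ^ ((k * k + n) * (k * k + n)) * 2 ^ ((k * k + n) * (k * k + n))) := by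
        simpa only [hcard, hcardQ] using Fold.card_le (lab := pathType θ) (r := pathRank θ T)
    _ ≤ 2 ^ k * 2 ^ k * (2 ^ ((k * k + n) * (k * k + n)) * 2 ^ ((k * k + n) * (k * k + n))) := by
        gcongr
        exact Nat.lt_two_pow_self.le
    _ = 2 ^ (2 * k + 2 * (k * k + n) ^ 2) := by ring
    _ ≤ 2 ^ k ^ 8 := Nat.pow_le_pow_right two_pos
        (two_mul_add_two_mul_sq_le_pow_eight (Nat.le_self_pow hpos 2) Nat.lt_two_pow_self.le)
    _ = 2 ^ 2 ^ (8 * n) := by rw [hk, ← pow_mul, Nat.mul_comm]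

end CTLStar

open CTLStar in
theorem ctlstar_small_model_exponential_branching_general {θ : Form} (hθ : Satisfiable θ) :
    ∃ S : Type, Finite S ∧ ∃ (T : TS S) (π : T.Path),
      π.seq 0 = T.init ∧ Sat T π θ ∧
      Nat.card S ≤ 2 ^ 2 ^ (8 * θ.subf.card) ∧
      ∀ s : S, {t : S | T.step s t}.ncard ≤ 2 ^ θ.subf.card := by
  obtain ⟨S, T, π, -, hπ⟩ := hθ
  obtain ⟨c₀, hc₀⟩ := Fold.exists_lab_base_eq (lab := pathType θ) (r := pathRank θ T) π
  obtain ⟨σ, hσ, hK⟩ := exists_path_linTruth_eq (c₀ := c₀) (realizable_pathTruth θ c₀.base)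
  refine ⟨FoldedState θ T, Fold.finite, foldedTS c₀, σ, hσ, ?_, card_foldedState_le θ T,
    ncard_foldedTS_step_le⟩
  rw [sat_foldedTS_iff θ.mem_subf_self (atomHolds_foldedTS_iff subset_rfl), hK,
    show pathTruth θ c₀.base = pathTruth θ π from congrArg Prod.fst hc₀]
  exact (mem_pathTruth θ.mem_subf_self).2 hπ

/-- **Corollary (small model property).** There is a constant `c > 0` such that any
satisfiable CTL* formula `θ` has a model of size at most `2^(2^(c·|θ|))` and
branching-width at most `2^|θ|`. -/
theorem ctlstar_small_model_exponential_branching :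
    ∃ c : ℕ, 0 < c ∧ ∀ θ : Form, IsStateForm θ → Satisfiable θ →
      ∃ (S : Type), Finite S ∧ ∃ (T : TS S) (π : T.Path),
        π.seq 0 = T.init ∧ Sat T π θ ∧
        Nat.card S ≤ 2 ^ 2 ^ (c * θ.subf.card) ∧
        ∀ s : S, {t : S | T.step s t}.ncard ≤ 2 ^ θ.subf.card :=
  ⟨8, by norm_num, fun _ _ hθ => ctlstar_small_model_exponential_branching_general hθ⟩
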